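/- (Connectivity by single-site moves; Step 1 of the proof of Lemma 2.6.) Let k ∈ ℕ, T0 < T1 be integers, x⃗, y⃗ ∈ 𝔚_k, and g : ⟦T0,T1⟧ → [−∞,∞), with Ω_Inter(T0,T1,x⃗,y⃗,∞,g) ≠ ∅, and let Q_i^max(T0+s) = min(x_{i−s}, y_i) (convention x_m = +∞ for m ≤ 0) be the maximal configuration. Set A = (T1 − T0 + 1)·k. Then for every 𝔔 ∈ Ω_Inter(T0,T1,x⃗,y⃗,∞,g) there exists a sequence 𝔔^0, 𝔔^1, …, 𝔔^A of elements of Ω_Inter(T0,T1,x⃗,y⃗,∞,g) such that 𝔔^0 = 𝔔, 𝔔^A = 𝔔^max, and for each m ∈ ⟦0, A−1⟧ the configurations 𝔔^m and 𝔔^{m+1} differ in at most one coordinate, i.e. Q_i^m(s) ≠ Q_i^{m+1}(s) for at most one pair (i,s) ∈ ⟦1,k⟧ × ⟦T0,T1⟧. -/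

import Mathlib

open MeasureTheory Filter Topology ProbabilityTheory
open scoped ENNReal NNReal

/-- An increasing (integer) path on the integer interval `⟦T0, T1⟧`,
extended constantly to the rest of `ℤ`. -/
def IncrPath (T0 T1 : ℤ) (L : ℤ → ℤ) : Prop :=
  (∀ j : ℤ, T0 ≤ j → j < T1 → L j ≤ L (j + 1)) ∧
  (∀ s : ℤ, s ≤ T0 → L s = L T0) ∧ (∀ s : ℤ, T1 ≤ s → L s = L T1)

/-- The set `Ω(T0,T1,x,y)` of increasing paths from `(T0,x)` to `(T1,y)`. -/
def OmegaPath (T0 T1 : ℤ) (x y : ℤ) : Set (ℤ → ℤ) :=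
  {L | IncrPath T0 T1 L ∧ L T0 = x ∧ L T1 = y}

/-- The set `Ω_Inter(T0,T1,x⃗,y⃗,f,g)` of `k`-tuples of increasing paths with prescribed
entrance and exit data, interlacing with each other and with the boundary functions
`f` (above) and `g` (below). -/
def OmegaInter (T0 T1 : ℤ) {k : ℕ} (x y : Fin k → ℤ) (f g : ℤ → EReal) :
    Set (Fin k → ℤ → ℤ) :=
  {Q | (∀ i, IncrPath T0 T1 (Q i)) ∧ (∀ i, Q i T0 = x i) ∧ (∀ i, Q i T1 = y i) ∧
    ∀ r : ℤ, T0 < r → r ≤ T1 →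
      (∀ i : Fin k, (i : ℕ) = 0 → ((Q i r : ℝ) : EReal) ≤ f (r - 1)) ∧
      (∀ i j : Fin k, (j : ℕ) = (i : ℕ) + 1 → Q j r ≤ Q i (r - 1)) ∧
      (∀ i : Fin k, (i : ℕ) = k - 1 → g r ≤ ((Q i (r - 1) : ℝ) : EReal))}

/-- The maximal interlacing configuration: `Q_i^max(T0+s) = min (x_{i-s}) (y_i)`, with the
convention `x_m = +∞` for `m ≤ 0`, defined on all of `ℤ` by clamping `s` to `⟦0, T1-T0⟧`. -/
def Qmax (T0 T1 : ℤ) {k : ℕ} (x y : Fin k → ℤ) (i : Fin k) (t : ℤ) : ℤ :=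
  if max 0 (min (t - T0) (T1 - T0)) ≤ (i : ℤ) then
    min (x ⟨(i : ℕ) - (max 0 (min (t - T0) (T1 - T0))).toNat,
      Nat.lt_of_le_of_lt (Nat.sub_le _ _) i.isLt⟩) (y i)
  else y i

/-! Interlacing pushes a configuration below `Qmax`: descending one path per time step to the left
bounds `Q_i(T0+s)` by `x_{i-s}`, and monotonicity bounds it by `y_i`. In particular `Qmax` dominates
the given `Q`, so it stays above `g`.

To climb from `Q` to any `M ≥ Q`, raise the sites one at a time, path by path from the top one down
and, along each path, from right to left. The values that bound a site from above are those at the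
next time on its own path and at the previous time on the path above. Both are raised before the
site itself, so every intermediate configuration satisfies the same constraints. -/

section Bounds

variable {k : ℕ} {T0 T1 t : ℤ} {x y : Fin k → ℤ} {f g : ℤ → EReal} {Q : Fin k → ℤ → ℤ}
  {i j : Fin k}

lemma IncrPath.monotone {L : ℤ → ℤ} (hL : IncrPath T0 T1 L) : Monotone L := by
  obtain ⟨hstep, hleft, hright⟩ := hL
  refine monotone_int_of_le_succ fun j => ?_
  rcases lt_or_ge j T0 with hj | hj
  · rw [hleft j hj.le, hleft (j + 1) hj]
  rcases lt_or_ge j T1 with hj' | hj'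
  · exact hstep j hj hj'
  · rw [hright j hj', hright (j + 1) (by lia)]

lemma IncrPath.le_right {L : ℤ → ℤ} (hL : IncrPath T0 T1 L) (t : ℤ) : L t ≤ L T1 := by
  rcases le_total t T1 with ht | ht
  · exact hL.monotone ht
  · exact (hL.2.2 t ht).le

lemma OmegaInter.apply_add_le (hQ : Q ∈ OmegaInter T0 T1 x y f g) {s : ℕ}
    (hij : (j : ℕ) = i + s) (ht : T0 ≤ t) (hs : t + s ≤ T1) : Q j (t + s) ≤ Q i t := by
  induction s generalizing j with
  | zero => simp [Fin.ext hij]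
  | succ s ih =>
    let j' : Fin k := ⟨i + s, by lia⟩
    have hstep : Q j (t + s + 1) ≤ Q j' (t + s + 1 - 1) :=
      (hQ.2.2.2 (t + s + 1) (by lia) (by lia)).2.1 j' j hij
    rw [add_sub_cancel_right] at hstep
    rw [Nat.cast_succ, ← add_assoc]
    exact hstep.trans (ih rfl (by lia))

lemma le_Qmax_iff {a : ℤ} (ht0 : T0 ≤ t) (ht1 : t ≤ T1) :
    a ≤ Qmax T0 T1 x y j t ↔ a ≤ y j ∧ ∀ i : Fin k, (j : ℤ) = i + (t - T0) → a ≤ x i := by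
  have hclamp : max 0 (min (t - T0) (T1 - T0)) = t - T0 := by lia
  simp only [Qmax, hclamp]
  split_ifs with h
  · rw [le_min_iff, and_comm]
    refine and_congr_right fun _ => ⟨fun ha i hi => ?_, fun ha => ha _ (by simp only; omega)⟩
    exact ha.trans_eq (congrArg x (Fin.ext (by simp only; omega)))
  · exact ⟨fun ha => ⟨ha, fun i hi => absurd hi (by lia)⟩, And.left⟩

lemma Qmax_of_le_left (hT : T0 ≤ T1) (ht : t ≤ T0) :
    Qmax T0 T1 x y i t = Qmax T0 T1 x y i T0 := by
  have hclamp : max 0 (min (t - T0) (T1 - T0)) = max 0 (min (T0 - T0) (T1 - T0)) := by lia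
  simp only [Qmax, hclamp]

lemma Qmax_of_right_le (ht : T1 ≤ t) : Qmax T0 T1 x y i t = Qmax T0 T1 x y i T1 := by
  have hclamp : max 0 (min (t - T0) (T1 - T0)) = max 0 (min (T1 - T0) (T1 - T0)) := by lia
  simp only [Qmax, hclamp]

lemma OmegaInter.le_Qmax (hT : T0 ≤ T1) (hQ : Q ∈ OmegaInter T0 T1 x y f g) :
    Q ≤ Qmax T0 T1 x y := by
  have hIcc : ∀ i t, T0 ≤ t → t ≤ T1 → Q i t ≤ Qmax T0 T1 x y i t := by
    intro j t ht0 ht1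
    refine (le_Qmax_iff ht0 ht1).2 ⟨((hQ.1 j).le_right t).trans_eq (hQ.2.2.1 j), fun i hij => ?_⟩
    obtain ⟨s, rfl⟩ := Int.le.dest ht0
    exact (apply_add_le hQ (by omega) le_rfl ht1).trans_eq (hQ.2.1 i)
  intro i t
  rcases le_total t T0 with ht0 | ht0
  · rw [(hQ.1 i).2.1 t ht0, Qmax_of_le_left hT ht0]
    exact hIcc i T0 le_rfl hT
  rcases le_total t T1 with ht1 | ht1
  · exact hIcc i t ht0 ht1
  · rw [(hQ.1 i).2.2 t ht1, Qmax_of_right_le ht1]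
    exact hIcc i T1 hT le_rfl

lemma incrPath_Qmax (hT : T0 ≤ T1) (hx : Antitone x) (i : Fin k) :
    IncrPath T0 T1 (Qmax T0 T1 x y i) := by
  refine ⟨fun t ht0 ht1 => ?_, fun t => Qmax_of_le_left hT, fun t => Qmax_of_right_le⟩
  obtain ⟨hle_y, hle_x⟩ := (le_Qmax_iff ht0 ht1.le).1 (le_refl (Qmax T0 T1 x y i t))
  refine (le_Qmax_iff (by lia) (by lia)).2 ⟨hle_y, fun l hl => ?_⟩
  let l' : Fin k := ⟨l + 1, by omega⟩
  exact (hle_x l' (by simp only [l']; omega)).trans (hx (Nat.le_succ l))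

lemma Qmax_interlace (hy : Antitone y) (hij : (j : ℕ) = i + 1) (ht0 : T0 < t) (ht1 : t ≤ T1) :
    Qmax T0 T1 x y j t ≤ Qmax T0 T1 x y i (t - 1) := by
  obtain ⟨hle_y, hle_x⟩ := (le_Qmax_iff ht0.le ht1).1 (le_refl (Qmax T0 T1 x y j t))
  refine (le_Qmax_iff (by lia) (by lia)).2 ⟨hle_y.trans (hy ?_), fun l hl => hle_x l (by lia)⟩
  exact Fin.le_def.2 (by lia)

lemma Qmax_mem_OmegaInter (hT : T0 ≤ T1) (hx : Antitone x) (hy : Antitone y)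
    (hQ : Q ∈ OmegaInter T0 T1 x y f g) :
    Qmax T0 T1 x y ∈ OmegaInter T0 T1 x y (fun _ => ⊤) g := by
  have hle := OmegaInter.le_Qmax hT hQ
  obtain ⟨-, hleft, hright, hinter⟩ := hQ
  refine ⟨incrPath_Qmax hT hx, fun i => le_antisymm ?_ ((hleft i).symm.trans_le (hle i T0)),
    fun i => le_antisymm ?_ ((hright i).symm.trans_le (hle i T1)), fun r hr0 hr1 =>
    ⟨fun _ _ => le_top, fun i j hij => Qmax_interlace hy hij hr0 hr1, fun i hi => ?_⟩⟩
  · exact ((le_Qmax_iff le_rfl hT).1 le_rfl).2 i (by simp)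
  · exact ((le_Qmax_iff hT le_rfl).1 le_rfl).1
  · exact ((hinter r hr0 hr1).2.2 i hi).trans (mod_cast hle i (r - 1))

end Bounds

section Raising

/-- The position of the site `(i, t)` in the order in which sites are raised: by increasing `i`,
then by decreasing `t`. Times are clamped to `⟦T0, T1⟧`, so that a site outside the interval is
raised together with the endpoint whose value it copies. -/
def siteRank (T0 T1 : ℤ) {k : ℕ} (i : Fin k) (t : ℤ) : ℕ :=
  (T1 - T0 + 1).toNat * i + (T1 - max T0 (min t T1)).toNat

/-- The intermediate configuration on the way from `Q` to `M`: the first `m` sites in the order of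
`siteRank` have been moved to their values in `M`. -/
def raise (T0 T1 : ℤ) {k : ℕ} (Q M : Fin k → ℤ → ℤ) (m : ℕ) : Fin k → ℤ → ℤ :=
  fun i t => if siteRank T0 T1 i t < m then M i t else Q i t

variable {k : ℕ} {T0 T1 s t : ℤ} {x y : Fin k → ℤ} {f g : ℤ → EReal} {Q M : Fin k → ℤ → ℤ}
  {i j : Fin k} {m : ℕ}

lemma siteRank_antitone : Antitone (siteRank T0 T1 i) := fun s t hst => by
  unfold siteRank
  lia

lemma siteRank_lt_mul_succ (hT : T0 ≤ T1) (i : Fin k) (t : ℤ) :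
    siteRank T0 T1 i t < (T1 - T0 + 1).toNat * (i + 1) := by
  rw [siteRank, mul_add_one]
  lia

lemma siteRank_lt_siteRank (hT : T0 ≤ T1) (hij : i < j) (s t : ℤ) :
    siteRank T0 T1 i s < siteRank T0 T1 j t :=
  calc siteRank T0 T1 i s < (T1 - T0 + 1).toNat * (i + 1) := siteRank_lt_mul_succ hT i s
    _ ≤ (T1 - T0 + 1).toNat * j := Nat.mul_le_mul_left _ hij
    _ ≤ siteRank T0 T1 j t := Nat.le_add_right _ _

lemma siteRank_inj (hs : s ∈ Set.Icc T0 T1) (ht : t ∈ Set.Icc T0 T1)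
    (h : siteRank T0 T1 i s = siteRank T0 T1 j t) : i = j ∧ s = t := by
  obtain ⟨hs0, hs1⟩ := hs
  obtain ⟨ht0, ht1⟩ := ht
  have hT : T0 ≤ T1 := hs0.trans hs1
  obtain rfl : i = j := by
    rcases lt_trichotomy i j with hij | hij | hij
    · exact absurd h (siteRank_lt_siteRank hT hij s t).ne
    · exact hij
    · exact absurd h (siteRank_lt_siteRank hT hij t s).ne'
  unfold siteRank at h
  exact ⟨rfl, by lia⟩

lemma siteRank_of_le_left (hT : T0 ≤ T1) (ht : t ≤ T0) :
    siteRank T0 T1 i t = siteRank T0 T1 i T0 := by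
  unfold siteRank
  lia

lemma siteRank_of_right_le (ht : T1 ≤ t) : siteRank T0 T1 i t = siteRank T0 T1 i T1 := by
  unfold siteRank
  lia

lemma raise_zero : raise T0 T1 Q M 0 = Q := rfl

lemma raise_eq_right (hT : T0 ≤ T1) : raise T0 T1 Q M ((T1 - T0 + 1).toNat * k) = M := by
  funext i t
  exact if_pos ((siteRank_lt_mul_succ hT i t).trans_le (Nat.mul_le_mul_left _ i.isLt))

lemma siteRank_eq_of_raise_ne (h : raise T0 T1 Q M m i t ≠ raise T0 T1 Q M (m + 1) i t) :
    siteRank T0 T1 i t = m := by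
  unfold raise at h
  split_ifs at h <;> first | contradiction | lia

lemma raise_le_raise (hQM : Q ≤ M) (hrank : siteRank T0 T1 j t ≤ siteRank T0 T1 i s)
    (hQ : Q i s ≤ Q j t) (hM : M i s ≤ M j t) :
    raise T0 T1 Q M m i s ≤ raise T0 T1 Q M m j t := by
  by_cases hi : siteRank T0 T1 i s < m
  · simpa only [raise, if_pos hi, if_pos (hrank.trans_lt hi)] using hM
  · calc raise T0 T1 Q M m i s = Q i s := if_neg hi
      _ ≤ Q j t := hQ
      _ ≤ raise T0 T1 Q M m j t := by
        unfold raise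
        split_ifs
        exacts [hQM j t, le_rfl]

lemma incrPath_raise (hT : T0 ≤ T1) (hQM : Q ≤ M) (hQ : IncrPath T0 T1 (Q i))
    (hM : IncrPath T0 T1 (M i)) : IncrPath T0 T1 (raise T0 T1 Q M m i) := by
  refine ⟨fun t ht0 ht1 => ?_, fun t ht => ?_, fun t ht => ?_⟩
  · exact raise_le_raise hQM (siteRank_antitone (by lia)) (hQ.1 t ht0 ht1) (hM.1 t ht0 ht1)
  · simp only [raise, siteRank_of_le_left hT ht, hQ.2.1 t ht, hM.2.1 t ht]
  · simp only [raise, siteRank_of_right_le ht, hQ.2.2 t ht, hM.2.2 t ht]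

lemma raise_mem_OmegaInter (hT : T0 ≤ T1) (hQM : Q ≤ M) (hQ : Q ∈ OmegaInter T0 T1 x y f g)
    (hM : M ∈ OmegaInter T0 T1 x y f g) (m : ℕ) :
    raise T0 T1 Q M m ∈ OmegaInter T0 T1 x y f g := by
  obtain ⟨hQpath, hQleft, hQright, hQinter⟩ := hQ
  obtain ⟨hMpath, hMleft, hMright, hMinter⟩ := hM
  refine ⟨fun i => incrPath_raise hT hQM (hQpath i) (hMpath i), fun i => ?_, fun i => ?_,
    fun r hr0 hr1 => ?_⟩
  · simp only [raise, hQleft, hMleft, ite_self]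
  · simp only [raise, hQright, hMright, ite_self]
  obtain ⟨hQf, hQstep, hQg⟩ := hQinter r hr0 hr1
  obtain ⟨hMf, hMstep, hMg⟩ := hMinter r hr0 hr1
  refine ⟨fun i hi => ?_, fun i j hij => ?_, fun i hi => ?_⟩
  · unfold raise
    split_ifs
    exacts [hMf i hi, hQf i hi]
  · have hlt : i < j := Fin.lt_def.2 (by lia)
    exact raise_le_raise hQM (siteRank_lt_siteRank hT hlt (r - 1) r).le (hQstep i j hij)
      (hMstep i j hij)
  · unfold raise
    split_ifs
    exacts [hMg i hi, hQg i hi]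

end Raising

theorem connectivity_single_site_moves_general {k : ℕ} {T0 T1 : ℤ} (hT : T0 ≤ T1)
    {x y : Fin k → ℤ} {f g : ℤ → EReal} {Q M : Fin k → ℤ → ℤ}
    (hQ : Q ∈ OmegaInter T0 T1 x y f g) (hM : M ∈ OmegaInter T0 T1 x y f g) (hQM : Q ≤ M) :
    ∃ c : ℕ → (Fin k → ℤ → ℤ),
      c 0 = Q ∧ c ((T1 - T0 + 1).toNat * k) = M ∧
      (∀ m ≤ (T1 - T0 + 1).toNat * k, c m ∈ OmegaInter T0 T1 x y f g) ∧
      ∀ m < (T1 - T0 + 1).toNat * k, ∀ (i1 i2 : Fin k) (s1 s2 : ℤ),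
        T0 ≤ s1 → s1 ≤ T1 → T0 ≤ s2 → s2 ≤ T1 →
        c m i1 s1 ≠ c (m + 1) i1 s1 → c m i2 s2 ≠ c (m + 1) i2 s2 →
        i1 = i2 ∧ s1 = s2 := by
  refine ⟨raise T0 T1 Q M, raise_zero, raise_eq_right hT,
    fun m _ => raise_mem_OmegaInter hT hQM hQ hM m, ?_⟩
  intro m _ i1 i2 s1 s2 h1 h1' h2 h2' hne1 hne2
  exact siteRank_inj ⟨h1, h1'⟩ ⟨h2, h2'⟩
    ((siteRank_eq_of_raise_ne hne1).trans (siteRank_eq_of_raise_ne hne2).symm)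

/-- (Connectivity by single-site moves; Step 1 of the proof of Lemma 2.6.) Every element of
`Ω_Inter(T0,T1,x⃗,y⃗,∞,g)` is connected to the maximal configuration by `A = (T1-T0+1)·k`
moves, each changing the configuration in at most one coordinate `(i,s)`. -/
theorem connectivity_single_site_moves
    (k : ℕ) (T0 T1 : ℤ) (hT : T0 < T1) (x y : Fin k → ℤ)
    (hx : ∀ i j : Fin k, i ≤ j → x j ≤ x i) (hy : ∀ i j : Fin k, i ≤ j → y j ≤ y i)
    (g : ℤ → EReal) (hg : ∀ r : ℤ, T0 ≤ r → r ≤ T1 → g r ≠ ⊤)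
    (hne : (OmegaInter T0 T1 x y (fun _ => (⊤ : EReal)) g).Nonempty)
    (Q : Fin k → ℤ → ℤ) (hQ : Q ∈ OmegaInter T0 T1 x y (fun _ => (⊤ : EReal)) g) :
    ∃ c : ℕ → (Fin k → ℤ → ℤ),
      c 0 = Q ∧ c ((T1 - T0 + 1).toNat * k) = Qmax T0 T1 x y ∧
      (∀ m ≤ (T1 - T0 + 1).toNat * k,
        c m ∈ OmegaInter T0 T1 x y (fun _ => (⊤ : EReal)) g) ∧
      ∀ m < (T1 - T0 + 1).toNat * k, ∀ (i1 i2 : Fin k) (s1 s2 : ℤ),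
        T0 ≤ s1 → s1 ≤ T1 → T0 ≤ s2 → s2 ≤ T1 →
        c m i1 s1 ≠ c (m + 1) i1 s1 → c m i2 s2 ≠ c (m + 1) i2 s2 →
        i1 = i2 ∧ s1 = s2 :=
  connectivity_single_site_moves_general hT.le hQ (Qmax_mem_OmegaInter hT.le hx hy hQ)
    (OmegaInter.le_Qmax hT.le hQ)
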